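/- In large school choice markets, the share of profiles at which RSD rank dominates ABM vanishes: fix m ≥ 3, and let (N^k, M^k, q^k)_{k≥0} be any sequence of settings with #M^k = m objects, min_{j∈M^k} q^k_j → ∞ as k → ∞, and n_k = #N^k = Σ_{j∈M^k} q^k_j agents. Then the fraction of type profiles t ∈ T^{n_k} at which RSD(t) weakly rank dominates ABM(t) in the setting (N^k, M^k, q^k) tends to 0 as k → ∞. -/

import Mathlib

/-!
The comparison already fails at the first rank. Write `n_j` for the number of agents whose first
choice is `j` (`demand`) and `n_ab` for the number of agents whose top two objects are `a`, `b`, in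
this order (`demand2`). For every priority ordering the first round of ABM satisfies `min n_j q_j`
agents with first choice `j` at each object `j`, and a serial dictatorship never exceeds this number
(`ABM_firstHolders`, `SD_firstHolders_le`). So RSD can only weakly rank dominate ABM if no priority
ordering makes the serial dictatorship lose a first choice.

A losing ordering (`SD_loses`) exists as soon as there are `a ≠ b` and `s ≥ 1` with `s ≤ n_ab`,
`s ≤ n_a - q_a`, `s ≤ q_b` and `q_b < n_b + s`: serve `q_a` agents with first choice `a`, then `s`
others with top choices `a`, `b`, who all take copies of `b`. Such `a`, `b`, `s` exist whenever all
`n_ab` are positive and demand does not equal capacity at every object (`exists_losing_pair`). Indeed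
some `a` has `n_a > q_a`. If another object is demanded at least to capacity, take it as `b` with
`s = 1`. Otherwise the identity `∑_{b ≠ a} (n_ab + n_b - q_b) = q_a > 0`, which uses that the number
of agents equals the total capacity, yields some `b` with `n_ab > q_b - n_b`, and a third
under-demanded object makes `q_b - n_b` smaller than `n_a - q_a`; take `s = q_b - n_b + 1`.

Both exceptional events have vanishing share. The share of profiles with `n_ab = 0` is `c ^ n` for a
constant `c < 1`. For the exact fit, let `a`, `b` be two objects with `q_a ≤ q_b` and let level `r`
be the set of profiles with `n_a = q_a + r`, `n_b = q_b - r`. Swapping `a` and `b` in the preferences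
of one agent with first choice `b` leads from level `r` to level `r + 1`, and double counting shows
that the first `R` levels all have at least half the size of level `0` once `q_b ≥ 4R²`
(`card_shifted_step`, `card_exact_le`). The levels are disjoint, so level `0` has share at most
`2 / R`.
-/

open Finset

/-- A preference type (strict ranking of the `m` objects): `t k` is the object
ranked `k`-th (0-indexed).  Object `a` is preferred to `b` iff
`t.symm a < t.symm b`. -/
abbrev Pref (m : ℕ) := Fin m ≃ Fin m

/-- One round of a Boston-style mechanism: the agents in `order` (highest priority
first) that are not yet assigned apply to `choice i`; an applicant receives a copy
iff the remaining capacity of its chosen object is still positive. -/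
def applyRound {n m : ℕ} (choice : Fin n → Option (Fin m)) (order : List (Fin n))
    (st : (Fin n → Option (Fin m)) × (Fin m → ℕ)) :
    (Fin n → Option (Fin m)) × (Fin m → ℕ) :=
  order.foldl
    (fun s i =>
      match s.1 i with
      | some _ => s
      | none =>
        match choice i with
        | none => s
        | some j =>
          if 0 < s.2 j then
            (Function.update s.1 i (some j), Function.update s.2 j (s.2 j - 1))
          else s)
    st

/-- The list of agents in order of priority under `π` (the agent with `π i = 0` first). -/
def priorityList {n : ℕ} (π : Equiv.Perm (Fin n)) : List (Fin n) :=
  (List.finRange n).map π.symm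

/-- The most preferred object (under `ti`) among the objects with positive
remaining capacity, if any such object exists. -/
def favorite {m : ℕ} (ti : Pref m) (cap : Fin m → ℕ) : Option (Fin m) :=
  ((List.finRange m).find? (fun k => decide (0 < cap (ti k)))).map ti

/-- The naïve Boston mechanism for a fixed priority ordering `π`: in round `k`
every not-yet-assigned agent applies to its `k`-th ranked object. -/
def NBMassign {n m : ℕ} (q : Fin m → ℕ) (t : Fin n → Pref m) (π : Equiv.Perm (Fin n)) :
    Fin n → Option (Fin m) :=
  ((List.finRange m).foldl
    (fun st k => applyRound (fun i => some (t i k)) (priorityList π) st)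
    ((fun _ => none), q)).1

/-- The adaptive Boston mechanism for a fixed priority ordering `π`: in every round
each not-yet-assigned agent applies to its most preferred object among the objects
with strictly positive remaining capacity (at the beginning of the round). -/
def ABMassign {n m : ℕ} (q : Fin m → ℕ) (t : Fin n → Pref m) (π : Equiv.Perm (Fin n)) :
    Fin n → Option (Fin m) :=
  ((fun st => applyRound (fun i => favorite (t i) st.2) (priorityList π) st)^[n]
    ((fun _ => none), q)).1

/-- The serial dictatorship for a fixed priority ordering `π`: agents are processed
in order of priority, each receiving one copy of its most preferred object among
those with remaining capacity. -/
def SDassign {n m : ℕ} (q : Fin m → ℕ) (t : Fin n → Pref m) (π : Equiv.Perm (Fin n)) :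
    Fin n → Option (Fin m) :=
  ((priorityList π).foldl
    (fun s i =>
      match favorite (t i) s.2 with
      | none => s
      | some j => (Function.update s.1 i (some j), Function.update s.2 j (s.2 j - 1)))
    ((fun _ => none), q)).1

/-- The (deterministic) allocation matrix induced by an assignment of objects to agents. -/
def detAlloc {n m : ℕ} (a : Fin n → Option (Fin m)) : Fin n → Fin m → ℝ :=
  fun i j => if a i = some j then 1 else 0

/-- The naïve Boston mechanism: the average of `NBMassign` over all `n!` priority orderings. -/
noncomputable def NBM {n m : ℕ} (q : Fin m → ℕ) (t : Fin n → Pref m) : Fin n → Fin m → ℝ :=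
  fun i j => (∑ π : Equiv.Perm (Fin n), detAlloc (NBMassign q t π) i j) / (Nat.factorial n)

/-- The adaptive Boston mechanism: the average of `ABMassign` over all `n!` priority orderings. -/
noncomputable def ABM {n m : ℕ} (q : Fin m → ℕ) (t : Fin n → Pref m) : Fin n → Fin m → ℝ :=
  fun i j => (∑ π : Equiv.Perm (Fin n), detAlloc (ABMassign q t π) i j) / (Nat.factorial n)

/-- Random serial dictatorship: the average of `SDassign` over all `n!` priority orderings. -/
noncomputable def RSD {n m : ℕ} (q : Fin m → ℕ) (t : Fin n → Pref m) : Fin n → Fin m → ℝ :=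
  fun i j => (∑ π : Equiv.Perm (Fin n), detAlloc (SDassign q t π) i j) / (Nat.factorial n)

/-- `x` is an allocation for capacities `q`. -/
def IsAlloc {n m : ℕ} (q : Fin m → ℕ) (x : Fin n → Fin m → ℝ) : Prop :=
  (∀ i j, 0 ≤ x i j ∧ x i j ≤ 1) ∧ (∀ i, ∑ j, x i j = 1) ∧ ∀ j, ∑ i, x i j ≤ q j

/-- First-order stochastic dominance of `v` over `w` with respect to the ranking `ti`. -/
def FOSD {m : ℕ} (ti : Pref m) (v w : Fin m → ℝ) : Prop :=
  ∀ K : Fin m, ∑ k ∈ Finset.Iic K, w (ti k) ≤ ∑ k ∈ Finset.Iic K, v (ti k)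

/-- Strict first-order stochastic dominance. -/
def StrictFOSD {m : ℕ} (ti : Pref m) (v w : Fin m → ℝ) : Prop :=
  FOSD ti v w ∧ ∃ K : Fin m, ∑ k ∈ Finset.Iic K, w (ti k) < ∑ k ∈ Finset.Iic K, v (ti k)

/-- `x` ordinally dominates `y` at type profile `t`. -/
def OrdDom {n m : ℕ} (t : Fin n → Pref m) (x y : Fin n → Fin m → ℝ) : Prop :=
  ∀ i, FOSD (t i) (x i) (y i)

/-- `x` strictly ordinally dominates `y` at type profile `t`. -/
def StrictOrdDom {n m : ℕ} (t : Fin n → Pref m) (x y : Fin n → Fin m → ℝ) : Prop :=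
  OrdDom t x y ∧ ∃ i : Fin n, ∃ K : Fin m,
    ∑ k ∈ Finset.Iic K, y i (t i k) < ∑ k ∈ Finset.Iic K, x i (t i k)

/-- The rank distribution of allocation `x` at profile `t`: `rankDist t x k` is the
expected number of `k`-th (0-indexed) choices allocated. -/
noncomputable def rankDist {n m : ℕ} (t : Fin n → Pref m) (x : Fin n → Fin m → ℝ)
    (k : Fin m) : ℝ :=
  ∑ i, x i (t i k)

/-- `x` weakly rank dominates `y` at profile `t`. -/
def WeakRankDom {n m : ℕ} (t : Fin n → Pref m) (x y : Fin n → Fin m → ℝ) : Prop :=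
  ∀ K : Fin m, ∑ k ∈ Finset.Iic K, rankDist t y k ≤ ∑ k ∈ Finset.Iic K, rankDist t x k

/-- `x` strictly rank dominates `y` at profile `t`. -/
def StrictRankDom {n m : ℕ} (t : Fin n → Pref m) (x y : Fin n → Fin m → ℝ) : Prop :=
  WeakRankDom t x y ∧ ∃ K : Fin m,
    ∑ k ∈ Finset.Iic K, rankDist t y k < ∑ k ∈ Finset.Iic K, rankDist t x k

/-- Feasibility of a deterministic (total) assignment. -/
def Feasible {n m : ℕ} (q : Fin m → ℕ) (y : Fin n → Fin m) : Prop :=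
  ∀ j, (Finset.univ.filter fun i => y i = j).card ≤ q j

/-- Ex-post efficiency at `t` of a deterministic assignment `a`: no feasible
deterministic assignment makes every agent weakly better off and some agent
strictly better off. -/
def ExPostEfficientAt {n m : ℕ} (q : Fin m → ℕ) (t : Fin n → Pref m)
    (a : Fin n → Option (Fin m)) : Prop :=
  ¬ ∃ y : Fin n → Fin m, Feasible q y ∧
      (∀ i j, a i = some j → (t i).symm (y i) ≤ (t i).symm j) ∧
      ∃ i j, a i = some j ∧ (t i).symm (y i) < (t i).symm j

/-- The expected number of allocated first choices under `x` at profile `t`. -/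
noncomputable def d1 {n m : ℕ} (t : Fin n → Pref m) (x : Fin n → Fin m → ℝ) : ℝ :=
  ∑ i, ∑ j, if ((t i).symm j : ℕ) = 0 then x i j else 0

/-- `x` is first-choice-maximizing at profile `t`. -/
def FirstChoiceMax {n m : ℕ} (q : Fin m → ℕ) (t : Fin n → Pref m)
    (x : Fin n → Fin m → ℝ) : Prop :=
  IsAlloc q x ∧ ∀ y : Fin n → Fin m → ℝ, IsAlloc q y → d1 t y ≤ d1 t x

/-- `u` is a vNM utility function consistent with the ranking `ti`. -/
def Consistent {m : ℕ} (ti : Pref m) (u : Fin m → ℝ) : Prop :=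
  ∀ a b : Fin m, ti.symm a < ti.symm b → u b < u a

/-- Uniformly relatively bounded indifference with bound `r`. -/
def URBI {m : ℕ} (r : ℝ) (u : Fin m → ℝ) : Prop :=
  ∀ a b : Fin m, u b < u a → u b - (⨅ j, u j) ≤ r * (u a - (⨅ j, u j))

/-! ### Favourite objects -/

lemma favorite_pos {m : ℕ} {ti : Pref m} {cap : Fin m → ℕ} {j : Fin m}
    (h : favorite ti cap = some j) : 0 < cap j := by
  unfold favorite at h
  rw [Option.map_eq_some_iff] at h
  obtain ⟨k, hk, rfl⟩ := h
  simpa using List.find?_some hk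

lemma favorite_eq_of_first {m : ℕ} {ti : Pref m} {cap : Fin m → ℕ} {k : Fin m}
    (hk : 0 < cap (ti k)) (hlt : ∀ k' < k, cap (ti k') = 0) :
    favorite ti cap = some (ti k) := by
  unfold favorite
  rw [Option.map_eq_some_iff]
  refine ⟨k, ?_, rfl⟩
  rw [List.find?_eq_some_iff_getElem]
  refine ⟨by simpa using hk, k, by simp, by simp, ?_⟩
  intro j hj
  have := hlt ⟨j, hj.trans k.2⟩ hj
  simp [this]

/-! ### The serial dictatorship as a fold -/

/-- One step of the serial dictatorship: agent `i` takes its favourite available object. -/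
def sdStep {n m : ℕ} (t : Fin n → Pref m) (s : (Fin n → Option (Fin m)) × (Fin m → ℕ))
    (i : Fin n) : (Fin n → Option (Fin m)) × (Fin m → ℕ) :=
  match favorite (t i) s.2 with
  | none => s
  | some j => (Function.update s.1 i (some j), Function.update s.2 j (s.2 j - 1))

lemma SDassign_eq {n m : ℕ} (q : Fin m → ℕ) (t : Fin n → Pref m) (π : Equiv.Perm (Fin n)) :
    SDassign q t π = ((priorityList π).foldl (sdStep t) ((fun _ => none), q)).1 := rfl

lemma sdStep_of_some {n m : ℕ} {t : Fin n → Pref m}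
    {s : (Fin n → Option (Fin m)) × (Fin m → ℕ)} {i : Fin n} {j : Fin m}
    (h : favorite (t i) s.2 = some j) :
    sdStep t s i = (Function.update s.1 i (some j), Function.update s.2 j (s.2 j - 1)) := by
  unfold sdStep; rw [h]

lemma sdStep_of_none {n m : ℕ} {t : Fin n → Pref m}
    {s : (Fin n → Option (Fin m)) × (Fin m → ℕ)} {i : Fin n}
    (h : favorite (t i) s.2 = none) : sdStep t s i = s := by
  unfold sdStep; rw [h]

/-- The number of agents that hold object `j` under the assignment `a`. -/
def holders {n m : ℕ} (a : Fin n → Option (Fin m)) (j : Fin m) : ℕ :=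
  (univ.filter fun i => a i = some j).card

lemma holders_none {n m : ℕ} (j : Fin m) :
    holders (fun _ : Fin n => (none : Option (Fin m))) j = 0 := by
  simp [holders]

lemma holders_update_le {n m : ℕ} (a : Fin n → Option (Fin m)) (i : Fin n) (j j' : Fin m) :
    holders (Function.update a i (some j)) j' ≤ holders a j' + if j' = j then 1 else 0 := by
  unfold holders
  by_cases h : j' = j
  · subst h
    simp only [if_true]
    refine (card_le_card (t := insert i (univ.filter fun i => a i = some j')) ?_).trans
      (card_insert_le _ _)
    intro x hx
    by_cases hxi : x = i <;> simp_all [Function.update_apply]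
  · simp only [h, if_false, add_zero]
    apply card_le_card
    intro x hx
    by_cases hxi : x = i
    · subst hxi
      simp only [mem_filter, Function.update_self, Option.some.injEq] at hx
      exact absurd hx.2.symm h
    · simp_all [Function.update_apply]

lemma holders_update_of_none {n m : ℕ} (a : Fin n → Option (Fin m)) (i : Fin n) (j j' : Fin m)
    (hi : a i = none) :
    holders (Function.update a i (some j)) j' = holders a j' + if j' = j then 1 else 0 := by
  unfold holders
  by_cases h : j' = j
  · subst h
    simp only [if_true]
    rw [← card_insert_of_notMem (a := i) (by simp [hi])]
    congr 1
    ext x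
    by_cases hxi : x = i <;> simp_all [Function.update_apply]
  · simp only [h, if_false, add_zero]
    congr 1
    ext x
    by_cases hxi : x = i
    · subst hxi
      simp [hi, Ne.symm h]
    · simp_all [Function.update_apply]

lemma sd_capacity {n m : ℕ} (q : Fin m → ℕ) (t : Fin n → Pref m) (L : List (Fin n))
    (s : (Fin n → Option (Fin m)) × (Fin m → ℕ)) (hs : ∀ j, holders s.1 j + s.2 j ≤ q j) (j) :
    holders (L.foldl (sdStep t) s).1 j + (L.foldl (sdStep t) s).2 j ≤ q j := by
  induction L generalizing s with
  | nil => exact hs j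
  | cons i L ih =>
    rw [List.foldl_cons]
    apply ih
    intro j'
    cases hf : favorite (t i) s.2 with
    | none => rw [sdStep_of_none hf]; exact hs j'
    | some c =>
      rw [sdStep_of_some hf]
      have h1 := holders_update_le s.1 i c j'
      have h2 := hs j'
      have h3 := favorite_pos hf
      by_cases h : j' = c
      · subst h; simp at h1 ⊢; omega
      · simp [h] at h1 ⊢; omega

lemma holders_SD_le {n m : ℕ} (q : Fin m → ℕ) (t : Fin n → Pref m) (π : Equiv.Perm (Fin n))
    (j : Fin m) : holders (SDassign q t π) j ≤ q j := by
  rw [SDassign_eq]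
  have := sd_capacity q t (priorityList π) ((fun _ => none), q)
    (fun j => by simp [holders_none]) j
  omega

lemma sd_fold_notMem {n m : ℕ} (t : Fin n → Pref m) (L : List (Fin n))
    (s : (Fin n → Option (Fin m)) × (Fin m → ℕ)) (i : Fin n) (hi : i ∉ L) :
    (L.foldl (sdStep t) s).1 i = s.1 i := by
  induction L generalizing s with
  | nil => rfl
  | cons x L ih =>
    rw [List.mem_cons, not_or] at hi
    rw [List.foldl_cons, ih _ hi.2]
    cases hf : favorite (t x) s.2 with
    | none => rw [sdStep_of_none hf]
    | some c => rw [sdStep_of_some hf]; simp [hi.1]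

/-- Agents who all want `c` as long as it is available, and who are not more numerous than its
remaining copies, all receive `c`. -/
lemma sd_fold_common {n m : ℕ} (t : Fin n → Pref m) (L : List (Fin n)) (hL : L.Nodup)
    (s : (Fin n → Option (Fin m)) × (Fin m → ℕ)) (c : Fin m) (hlen : L.length ≤ s.2 c)
    (hfav : ∀ i ∈ L, ∀ cap : Fin m → ℕ, (∀ j, j ≠ c → cap j = s.2 j) → 0 < cap c →
      favorite (t i) cap = some c) :
    (L.foldl (sdStep t) s).2 = Function.update s.2 c (s.2 c - L.length) ∧
      ∀ i ∈ L, (L.foldl (sdStep t) s).1 i = some c := by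
  induction L generalizing s with
  | nil => simp
  | cons x L ih =>
    have hx : favorite (t x) s.2 = some c :=
      hfav x (by simp) s.2 (fun _ _ => rfl) (by simp at hlen; omega)
    rw [List.foldl_cons, sdStep_of_some hx]
    rw [List.nodup_cons] at hL
    simp only [List.length_cons] at hlen
    obtain ⟨h1, h2⟩ := ih hL.2
      (Function.update s.1 x (some c), Function.update s.2 c (s.2 c - 1))
      (by simp; omega)
      (fun i hi cap hcap hpos => hfav i (by simp [hi]) cap
        (fun j hj => by rw [hcap j hj]; simp [hj]) hpos)
    refine ⟨?_, ?_⟩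
    · rw [h1]
      simp only [Function.update_idem, Function.update_self, List.length_cons]
      congr 1
      omega
    · intro i hi
      rcases List.mem_cons.1 hi with rfl | hi
      · rw [sd_fold_notMem _ _ _ _ hL.1]; simp
      · exact h2 i hi

lemma exists_priorityList {n : ℕ} (l : List (Fin n)) (hl : l.Nodup) (hmem : ∀ i, i ∈ l) :
    ∃ π : Equiv.Perm (Fin n), priorityList π = l := by
  have hlen : l.length = n := by
    have := List.toFinset_card_of_nodup hl
    rw [← this, (by ext; simp [hmem] : l.toFinset = univ)]
    simp
  have hinj : Function.Injective (fun k : Fin n => l.get (k.cast hlen.symm)) := by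
    intro a b hab
    have := hl.injective_get hab
    simpa using this
  refine ⟨(Equiv.ofBijective _ (Finite.injective_iff_bijective.1 hinj)).symm, ?_⟩
  apply List.ext_getElem
  · simp [priorityList, hlen]
  · intro k h1 h2
    simp [priorityList]

lemma mem_priorityList {n : ℕ} (π : Equiv.Perm (Fin n)) (i : Fin n) : i ∈ priorityList π := by
  simp only [priorityList, List.mem_map, List.mem_finRange, true_and]
  exact ⟨π i, by simp⟩

/-! ### The first round of the Boston mechanism -/

/-- One step of `applyRound`. -/
def brStep {n m : ℕ} (choice : Fin n → Option (Fin m))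
    (s : (Fin n → Option (Fin m)) × (Fin m → ℕ)) (i : Fin n) :
    (Fin n → Option (Fin m)) × (Fin m → ℕ) :=
  match s.1 i with
  | some _ => s
  | none =>
    match choice i with
    | none => s
    | some j =>
      if 0 < s.2 j then
        (Function.update s.1 i (some j), Function.update s.2 j (s.2 j - 1))
      else s

lemma applyRound_eq {n m : ℕ} (choice : Fin n → Option (Fin m)) (order : List (Fin n))
    (st : (Fin n → Option (Fin m)) × (Fin m → ℕ)) :
    applyRound choice order st = order.foldl (brStep choice) st := rfl

lemma brStep_cases {n m : ℕ} (choice : Fin n → Option (Fin m))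
    (s : (Fin n → Option (Fin m)) × (Fin m → ℕ)) (i : Fin n) :
    (brStep choice s i = s ∧ (s.1 i ≠ none ∨ choice i = none ∨
        ∃ j, choice i = some j ∧ s.2 j = 0)) ∨
    ∃ j, s.1 i = none ∧ choice i = some j ∧ 0 < s.2 j ∧
      brStep choice s i =
        (Function.update s.1 i (some j), Function.update s.2 j (s.2 j - 1)) := by
  unfold brStep
  cases h1 : s.1 i with
  | some j => simp
  | none =>
    cases h2 : choice i with
    | none => simp
    | some j =>
      by_cases h3 : 0 < s.2 j
      · right; exact ⟨j, by simp [h3]⟩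
      · left; simp [h3]; omega

lemma applyRound_keeps {n m : ℕ} (choice : Fin n → Option (Fin m)) (L : List (Fin n))
    (s : (Fin n → Option (Fin m)) × (Fin m → ℕ)) (i : Fin n) (j : Fin m)
    (h : s.1 i = some j) : (applyRound choice L s).1 i = some j := by
  rw [applyRound_eq]
  induction L generalizing s with
  | nil => exact h
  | cons x L ih =>
    rw [List.foldl_cons]
    apply ih
    rcases brStep_cases choice s x with ⟨h1, -⟩ | ⟨j', h1, -, -, h2⟩
    · rw [h1, h]
    · rw [h2]
      have : i ≠ x := by rintro rfl; simp [h] at h1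
      simp [this, h]

/-- The state after the agents in `L` have applied in turn, where agent `i` applies to `c i` and the
assignment is initially empty: seats are accounted for, agents only hold what they applied for, and an agent in `L`
whose object has copies left holds that object. -/
lemma round_invariant {n m : ℕ} (q : Fin m → ℕ) (c : Fin n → Fin m) (L : List (Fin n)) :
    let s := applyRound (fun i => some (c i)) L ((fun _ => none), q)
    (∀ j, holders s.1 j + s.2 j = q j) ∧ (∀ i j, s.1 i = some j → c i = j) ∧
      ∀ i ∈ L, 0 < s.2 (c i) → s.1 i = some (c i) := by
  simp only [applyRound_eq]
  induction L using List.reverseRecOn with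
  | nil => simp [holders_none]
  | append_singleton L x ih =>
    rw [List.foldl_append, List.foldl_cons, List.foldl_nil]
    generalize L.foldl (brStep fun i => some (c i)) ((fun _ => none), q) = s at ih
    obtain ⟨ih1, ih2, ih3⟩ := ih
    rcases brStep_cases (fun i => some (c i)) s x with ⟨h1, h2⟩ | ⟨j, h1, h2, h3, h4⟩
    · rw [h1]
      refine ⟨ih1, ih2, ?_⟩
      intro i hi hpos
      rcases List.mem_append.1 hi with hi | hi
      · exact ih3 i hi hpos
      · obtain rfl := List.mem_singleton.1 hi
        rcases h2 with h2 | h2 | ⟨j, h2, h5⟩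
        · obtain ⟨j, hj⟩ := Option.ne_none_iff_exists'.1 h2
          rw [hj, ih2 _ _ hj]
        · simp at h2
        · obtain rfl : c i = j := by simpa using h2
          omega
    · obtain rfl : c x = j := by simpa using h2
      rw [h4]
      refine ⟨?_, ?_, ?_⟩
      · intro j
        have := ih1 j
        rw [holders_update_of_none _ _ _ _ h1]
        by_cases h : j = c x
        · subst h; simp; omega
        · simp [h]; omega
      · intro i j hij
        by_cases h : i = x
        · subst h; simpa using hij
        · exact ih2 i j (by simpa [h] using hij)
      · intro i hi hpos
        by_cases h : i = x
        · subst h; simp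
        · have hiL : i ∈ L := by simpa [h] using hi
          simp only [Function.update_of_ne h]
          apply ih3 i hiL
          by_cases h5 : c i = c x
          · rw [h5]; exact h3
          · simpa [h5] using hpos

/-- The number of agents whose object at rank `z` is `j`. -/
def demand {n m : ℕ} (t : Fin n → Pref m) (z j : Fin m) : ℕ :=
  (univ.filter fun i => t i z = j).card

/-- The number of agents who hold `j` and whose object at rank `z` is `j`. -/
def firstHolders {n m : ℕ} (t : Fin n → Pref m) (z : Fin m) (a : Fin n → Option (Fin m))
    (j : Fin m) : ℕ :=
  (univ.filter fun i => t i z = j ∧ a i = some j).card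

lemma ABM_firstHolders {n m : ℕ} (q : Fin m → ℕ) (hq : ∀ j, 0 < q j) (hn : 0 < n)
    (t : Fin n → Pref m) (z : Fin m) (hz : (z : ℕ) = 0) (π : Equiv.Perm (Fin n)) (j : Fin m) :
    min (demand t z j) (q j) ≤ firstHolders t z (ABMassign q t π) j := by
  obtain ⟨n', rfl⟩ : ∃ n', n = n' + 1 := ⟨n - 1, by omega⟩
  unfold ABMassign
  rw [Function.iterate_succ_apply]
  have hfav : (fun i => favorite (t i) q) = fun i => some (t i z) := by
    funext i
    exact favorite_eq_of_first (hq _) (fun k' hk' => by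
      have : (k' : ℕ) < z := hk'
      omega)
  simp only [hfav]
  obtain ⟨h1, h2, h3⟩ := round_invariant q (fun i => t i z) (priorityList π)
  generalize applyRound (fun i => some (t i z)) (priorityList π) ((fun _ => none), q) = s
    at h1 h2 h3
  -- First-round assignments survive all later rounds.
  have hkeep : ∀ (k : ℕ) (s : (Fin (n' + 1) → Option (Fin m)) × (Fin m → ℕ)) i j,
      s.1 i = some j →
      ((fun st => applyRound (fun i => favorite (t i) st.2) (priorityList π) st)^[k] s).1 i
        = some j := by
    intro k
    induction k with
    | zero => intro s i j h; exact h
    | succ k ih =>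
      intro s i j h
      rw [Function.iterate_succ_apply]
      exact ih _ i j (applyRound_keeps _ _ _ _ _ h)
  have hle : holders s.1 j ≤ firstHolders t z
      ((fun st => applyRound (fun i => favorite (t i) st.2) (priorityList π) st)^[n'] s).1 j := by
    apply card_le_card
    intro i hi
    rw [mem_filter] at hi ⊢
    exact ⟨hi.1, h2 _ _ hi.2, hkeep _ _ _ _ hi.2⟩
  refine le_trans ?_ hle
  rcases Nat.eq_zero_or_pos (s.2 j) with h0 | hpos
  · have := h1 j
    omega
  · refine (min_le_left _ _).trans (card_le_card ?_)
    intro i hi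
    rw [mem_filter] at hi ⊢
    obtain rfl := hi.2
    exact ⟨hi.1, h3 i (mem_priorityList π i) hpos⟩

lemma SD_firstHolders_le {n m : ℕ} (q : Fin m → ℕ) (t : Fin n → Pref m) (z : Fin m)
    (π : Equiv.Perm (Fin n)) (j : Fin m) :
    firstHolders t z (SDassign q t π) j ≤ min (demand t z j) (q j) := by
  refine le_min (card_le_card ?_) ((card_le_card ?_).trans (holders_SD_le q t π j))
  · intro i; simp +contextual
  · intro i; simp +contextual

/-- The number of agents who rank `a` at rank `z` and `b` at rank `o`. -/
def demand2 {n m : ℕ} (t : Fin n → Pref m) (z o a b : Fin m) : ℕ :=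
  (univ.filter fun i => t i z = a ∧ t i o = b).card

/-- If `s` agents with first choice `a` and second choice `b` come right after `q a` other agents
with first choice `a`, they all take copies of `b`; when the demand for `b` is large enough this
costs a first choice at `b`. -/
lemma SD_loses {n m : ℕ} (q : Fin m → ℕ) (t : Fin n → Pref m) (z o : Fin m)
    (hz : (z : ℕ) = 0) (ho : (o : ℕ) = 1) (a b : Fin m) (hab : a ≠ b) (s : ℕ)
    (hs1 : 1 ≤ s) (hs2 : s ≤ demand2 t z o a b) (hs3 : q a + s ≤ demand t z a)
    (hs4 : s ≤ q b) (hs5 : q b < demand t z b + s) :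
    ∃ π, firstHolders t z (SDassign q t π) b < min (demand t z b) (q b) := by
  obtain ⟨X, hX, hXc⟩ := exists_subset_card_eq hs2
  have hXA : X ⊆ univ.filter fun i => t i z = a := by
    intro i hi
    have := hX hi
    simp at this ⊢
    exact this.1
  obtain ⟨Y, hY, hYc⟩ := exists_subset_card_eq
    (s := (univ.filter fun i => t i z = a) \ X) (n := q a) (by
      rw [card_sdiff_of_subset hXA, hXc]
      unfold demand at hs3
      omega)
  have hXY : Disjoint Y X := by
    rw [disjoint_left]
    intro i hi hi'
    exact (mem_sdiff.1 (hY hi)).2 hi'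
  obtain ⟨π, hπ⟩ := exists_priorityList (Y.toList ++ X.toList ++ ((Y ∪ X)ᶜ).toList) (by
      rw [List.nodup_append, List.nodup_append]
      refine ⟨⟨Y.nodup_toList, X.nodup_toList, ?_⟩, nodup_toList _, ?_⟩
      · rintro i hi _ hj rfl
        exact disjoint_left.1 hXY (mem_toList.1 hi) (mem_toList.1 hj)
      · rintro i hi _ hj rfl
        simp at hi hj
        tauto)
    (by intro i; simp; tauto)
  refine ⟨π, ?_⟩
  have hget : ∀ i ∈ X, SDassign q t π i = some b := by
    intro i hi
    rw [SDassign_eq, hπ, List.foldl_append, sd_fold_notMem _ _ _ _ (by simp [hi]),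
      List.foldl_append]
    have h1 := (sd_fold_common t Y.toList Y.nodup_toList ((fun _ => none), q) a
      (by simp [hYc]) (by
        intro i hi cap _ hpos
        have hia : t i z = a := by
          have := hY (mem_toList.1 hi)
          simp at this; exact this.1
        rw [← hia] at hpos ⊢
        exact favorite_eq_of_first hpos (fun k' hk' => by
          have : (k' : ℕ) < z := hk'
          omega))).1
    simp only [length_toList, hYc, Nat.sub_self] at h1
    refine (sd_fold_common t X.toList X.nodup_toList _ b ?_ ?_).2 i (by simpa using hi)
    · rw [h1]; simp [Ne.symm hab, hXc, hs4]
    · intro i hi cap hcap hpos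
      have hi2 := hX (mem_toList.1 hi)
      simp only [mem_filter, mem_univ, true_and] at hi2
      have ha0 : cap a = 0 := by rw [hcap a hab, h1]; simp
      rw [← hi2.2] at hpos ⊢
      refine favorite_eq_of_first hpos (fun k' hk' => ?_)
      have : (k' : ℕ) < o := hk'
      obtain rfl : k' = z := Fin.ext (by omega)
      rw [hi2.1, ha0]
  have hsum : firstHolders t z (SDassign q t π) b + s ≤ holders (SDassign q t π) b := by
    unfold firstHolders holders
    rw [← hXc, ← card_union_of_disjoint]
    · apply card_le_card
      intro i hi
      simp only [mem_union, mem_filter, mem_univ, true_and] at hi ⊢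
      rcases hi with hi | hi
      · exact hi.2
      · exact hget i hi
    · rw [disjoint_left]
      intro i hi hi'
      have := hX hi'
      simp only [mem_filter, mem_univ, true_and] at this hi
      exact hab (this.1.symm.trans hi.1)
  have := holders_SD_le q t π b
  omega

/-! ### Existence of a losing pair of objects -/

lemma sum_demand {n m : ℕ} (t : Fin n → Pref m) (z : Fin m) : ∑ j, demand t z j = n := by
  have := card_eq_sum_card_fiberwise (s := (univ : Finset (Fin n))) (f := fun i => t i z)
    (t := univ) (by simp)
  simp only [card_univ, Fintype.card_fin] at this
  exact this.symm

lemma sum_demand2 {n m : ℕ} (t : Fin n → Pref m) (z o : Fin m) (hzo : z ≠ o) (a : Fin m) :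
    ∑ b ∈ univ.erase a, demand2 t z o a b = demand t z a := by
  have := card_eq_sum_card_fiberwise (s := univ.filter fun i : Fin n => t i z = a)
    (f := fun i => t i o) (t := univ.erase a) (by
      intro i hi
      simp only [coe_filter, mem_univ, true_and, Set.mem_ofPred_eq] at hi
      simp only [coe_erase, coe_univ, Set.mem_sdiff, Set.mem_univ, Set.mem_singleton_iff, true_and]
      rw [← hi]
      exact fun h => hzo ((t i).injective h.symm))
  simp only [filter_filter] at this
  exact this.symm

/-- If every ordered pair of distinct objects is the top two of some agent and the first-choice
demand does not match the capacities exactly, then some pair `a`, `b` satisfies the hypotheses of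
`SD_loses`. -/
lemma exists_losing_pair {n m : ℕ} (hm : 3 ≤ m) (q : Fin m → ℕ) (hq : ∀ j, 0 < q j)
    (hn : n = ∑ j, q j) (t : Fin n → Pref m) (z o : Fin m) (hzo : z ≠ o)
    (h2 : ∀ a b, a ≠ b → 1 ≤ demand2 t z o a b) (hne : ∃ j, demand t z j ≠ q j) :
    ∃ a b s, a ≠ b ∧ 1 ≤ s ∧ s ≤ demand2 t z o a b ∧ q a + s ≤ demand t z a ∧ s ≤ q b ∧
      q b < demand t z b + s := by
  have hsum : ∑ j, demand t z j = ∑ j, q j := by rw [sum_demand, hn]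
  have hover : ∃ a, q a < demand t z a := by
    by_contra! hcon
    obtain ⟨j, hj⟩ := hne
    exact hj ((sum_eq_sum_iff_of_le (fun j _ => hcon j)).1 hsum j (mem_univ j))
  obtain ⟨a, ha⟩ := hover
  by_cases hex : ∃ b, b ≠ a ∧ q b ≤ demand t z b
  · obtain ⟨b, hba, hb⟩ := hex
    exact ⟨a, b, 1, hba.symm, le_rfl, h2 a b hba.symm, ha, hq b, by omega⟩
  push Not at hex
  -- The sum of `demand2 a b + demand b - q b` over `b ≠ a` equals `q a > 0`.
  have e1 := sum_erase_add univ (fun j => demand t z j) (mem_univ a)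
  have e2 := sum_erase_add univ (fun j => q j) (mem_univ a)
  have e3 := sum_demand2 t z o hzo a
  obtain ⟨b, hb, hlt⟩ : ∃ b ∈ univ.erase a, q b < demand2 t z o a b + demand t z b := by
    apply exists_lt_of_sum_lt
    rw [sum_add_distrib, e3]
    have := hq a
    omega
  have hba : b ≠ a := (mem_erase.1 hb).1
  -- A third object, also under-demanded, makes the deficit of `b` smaller than the excess at `a`.
  obtain ⟨c, hc⟩ : ∃ c, c ∉ ({a, b} : Finset (Fin m)) := by
    by_contra! hcon
    have h := card_le_card (fun x _ => hcon x : (univ : Finset (Fin m)) ⊆ {a, b})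
    have := card_le_two (a := a) (b := b)
    simp only [card_univ, Fintype.card_fin] at h
    omega
  have e4 := sum_erase_add (univ.erase a) (fun j => demand t z j) hb
  have e5 := sum_erase_add (univ.erase a) (fun j => q j) hb
  have hstrict : ∑ j ∈ (univ.erase a).erase b, demand t z j <
      ∑ j ∈ (univ.erase a).erase b, q j := by
    apply sum_lt_sum_of_nonempty
    · refine ⟨c, ?_⟩
      simp at hc ⊢
      tauto
    · intro j hj
      exact hex j (by simp at hj; tauto)
  have hbpos : 1 ≤ demand t z b := by
    refine (h2 b a hba).trans (card_le_card ?_)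
    intro i; simp +contextual
  have hb' := hex b hba
  refine ⟨a, b, q b + 1 - demand t z b, hba.symm, by omega, by omega, by omega, by omega,
    by omega⟩

/-! ### Comparison of the expected numbers of first choices -/

lemma sum_detAlloc_first {n m : ℕ} (t : Fin n → Pref m) (z : Fin m)
    (a : Fin n → Option (Fin m)) :
    ∑ i, detAlloc a i (t i z) = ((∑ j, firstHolders t z a j : ℕ) : ℝ) := by
  have := card_eq_sum_card_fiberwise (s := univ.filter fun i : Fin n => a i = some (t i z))
    (f := fun i => t i z) (t := univ) (by simp)
  have h2 : ∀ j, firstHolders t z a j =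
      ((univ.filter fun i : Fin n => a i = some (t i z)).filter fun i => t i z = j).card := by
    intro j
    unfold firstHolders
    congr 1
    ext i
    simp only [mem_filter, mem_univ, true_and]
    constructor
    · rintro ⟨rfl, h⟩; exact ⟨h, rfl⟩
    · rintro ⟨h, rfl⟩; exact ⟨rfl, h⟩
  rw [sum_congr rfl (fun j _ => h2 j), ← this]
  simp [detAlloc]

lemma rankDist_average {n m : ℕ} (t : Fin n → Pref m) (z : Fin m)
    (f : Equiv.Perm (Fin n) → Fin n → Option (Fin m)) :
    rankDist t (fun i j => (∑ π, detAlloc (f π) i j) / (Nat.factorial n : ℝ)) z =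
      ((∑ π, ∑ j, firstHolders t z (f π) j : ℕ) : ℝ) / Nat.factorial n := by
  unfold rankDist
  rw [← sum_div, sum_comm]
  rw [sum_congr rfl (fun π _ => sum_detAlloc_first t z (f π))]
  push_cast
  rfl

/-- Under the conditions of `exists_losing_pair`, RSD assigns strictly fewer first choices in
expectation than ABM. -/
lemma not_weakRankDom {n m : ℕ} (hm : 3 ≤ m) (q : Fin m → ℕ) (hq : ∀ j, 0 < q j)
    (hn : n = ∑ j, q j) (t : Fin n → Pref m) (z o : Fin m) (hz : (z : ℕ) = 0) (ho : (o : ℕ) = 1)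
    (h2 : ∀ a b, a ≠ b → 1 ≤ demand2 t z o a b) (hne : ∃ j, demand t z j ≠ q j) :
    ¬ WeakRankDom t (RSD q t) (ABM q t) := by
  intro h
  have hIic : (Finset.Iic z : Finset (Fin m)) = {z} := by
    ext k
    simp only [mem_Iic, mem_singleton, Fin.le_def, Fin.ext_iff]
    omega
  have hzo : z ≠ o := by intro h; rw [h] at hz; omega
  have h0 := h z
  rw [hIic, sum_singleton, sum_singleton] at h0
  have hR : RSD q t = fun i j => (∑ π, detAlloc (SDassign q t π) i j) / (Nat.factorial n : ℝ) :=
    rfl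
  have hA : ABM q t = fun i j => (∑ π, detAlloc (ABMassign q t π) i j) / (Nat.factorial n : ℝ) :=
    rfl
  rw [hR, hA, rankDist_average, rankDist_average,
    div_le_div_iff_of_pos_right (by exact_mod_cast Nat.factorial_pos n), Nat.cast_le] at h0
  obtain ⟨a, b, s, hab, h1, h2', h3, h4, h5⟩ :=
    exists_losing_pair hm q hq hn t z o hzo h2 hne
  obtain ⟨π, hπ⟩ := SD_loses q t z o hz ho a b hab s h1 h2' h3 h4 h5
  have hnpos : 0 < n := by
    rw [hn]
    exact (hq z).trans_le (single_le_sum (f := q) (fun _ _ => Nat.zero_le _) (mem_univ z))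
  refine absurd h0 (not_le.2 ?_)
  apply sum_lt_sum
  · intro π _
    exact sum_le_sum fun j _ => (SD_firstHolders_le q t z π j).trans
      (ABM_firstHolders q hq hnpos t z hz π j)
  · refine ⟨π, mem_univ _, sum_lt_sum (fun j _ => (SD_firstHolders_le q t z π j).trans
      (ABM_firstHolders q hq hnpos t z hz π j)) ⟨b, mem_univ _, hπ.trans_le
      (ABM_firstHolders q hq hnpos t z hz π b)⟩⟩

/-! ### Exact fit of demand and capacities is rare -/

/-- The profiles whose first-choice demand exceeds `x` by `r` at `a` and falls short of `y` by `r`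
at `b`. -/
def shifted {n m : ℕ} (z a b : Fin m) (x y r : ℕ) : Finset (Fin n → Pref m) :=
  univ.filter fun t => demand t z a = x + r ∧ demand t z b + r = y

lemma demand_update_right {n m : ℕ} (t : Fin n → Pref m) (z : Fin m) (i : Fin n) (p : Pref m)
    (h : t i z ≠ p z) : demand (Function.update t i p) z (p z) = demand t z (p z) + 1 := by
  unfold demand
  rw [← card_insert_of_notMem (a := i) (by simp [h])]
  congr 1
  ext x
  by_cases hx : x = i <;> simp_all

lemma demand_update_left {n m : ℕ} (t : Fin n → Pref m) (z : Fin m) (i : Fin n) (p : Pref m)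
    (h : t i z ≠ p z) : demand (Function.update t i p) z (t i z) + 1 = demand t z (t i z) := by
  have := demand_update_right (Function.update t i p) z i (t i) (by simpa using h.symm)
  simpa using this.symm

/-- Swapping `a` and `b` in the preferences of one agent with first choice `b` moves a profile from
level `r` to level `r + 1`; double counting these moves compares the two levels. -/
lemma card_shifted_step {n m : ℕ} (z a b : Fin m) (hab : a ≠ b) (x y r : ℕ) :
    (shifted (n := n) z a b x y r).card * (y - r) ≤
      (shifted (n := n) z a b x y (r + 1)).card * (x + r + 1) := by
  classical
  let σ : Pref m := Equiv.swap a b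
  let φ : (Fin n → Pref m) → Fin n → (Fin n → Pref m) :=
    fun t i => Function.update t i ((t i).trans σ)
  apply card_mul_le_card_mul (fun t t' => ∃ i, t i z = b ∧ t' = φ t i)
  · intro t ht
    simp only [shifted, mem_filter, mem_univ, true_and] at ht
    have hcard : y - r = (univ.filter fun i => t i z = b).card := by
      have : demand t z b = (univ.filter fun i => t i z = b).card := rfl
      omega
    rw [hcard, ← card_image_of_injOn (f := φ t)]
    · apply card_le_card
      intro t' ht'
      rw [mem_image] at ht'
      obtain ⟨i, hi, rfl⟩ := ht'
      simp only [mem_filter, mem_univ, true_and] at hi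
      rw [mem_bipartiteAbove]
      refine ⟨?_, i, hi, rfl⟩
      have hp : ((t i).trans σ) z = a := by simp [σ, hi]
      have hne : t i z ≠ ((t i).trans σ) z := by rw [hp, hi]; exact hab.symm
      have h1 := demand_update_right t z i _ hne
      have h2 := demand_update_left t z i _ hne
      rw [hp] at h1
      rw [hi] at h2
      simp only [shifted, mem_filter, mem_univ, true_and, φ]
      omega
    · intro i hi i' hi' heq
      by_contra hne
      have h1 := congrFun heq i
      simp only [φ, Function.update_self, Function.update_of_ne hne] at h1
      have h2 := congrArg (fun p : Pref m => p z) h1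
      simp only [coe_filter, mem_univ, true_and, Set.mem_ofPred_eq] at hi
      simp [σ, hi] at h2
      exact hab h2
  · intro t' ht'
    simp only [shifted, mem_filter, mem_univ, true_and] at ht'
    have hcard : x + r + 1 = (univ.filter fun i => t' i z = a).card := by
      have : demand t' z a = (univ.filter fun i => t' i z = a).card := rfl
      omega
    rw [hcard]
    refine le_trans (card_le_card ?_) (card_image_le (f := φ t'))
    intro t ht
    rw [mem_bipartiteBelow] at ht
    obtain ⟨-, i, hi, rfl⟩ := ht
    rw [mem_image]
    refine ⟨i, by simp [φ, σ, hi], ?_⟩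
    have hσ : (((t i).trans σ).trans σ) = t i := by
      ext k; simp [σ]
    simp only [φ, Function.update_self, Function.update_idem, hσ, Function.update_eq_self]

/-- The first `R` levels are disjoint and each has at least half the size of level `0`, so level `0`
has share at most `2 / R`. -/
lemma card_exact_le {n m : ℕ} (z a b : Fin m) (hab : a ≠ b) (x y R : ℕ) (hxy : x ≤ y)
    (hR : 4 * R ^ 2 ≤ y) (hR1 : 1 ≤ R) :
    (R : ℝ) * (shifted (n := n) z a b x y 0).card ≤ 2 * Fintype.card (Fin n → Pref m) := by
  have hy : (0 : ℝ) < y := by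
    have : 0 < 4 * R ^ 2 := by positivity
    exact_mod_cast this.trans_le hR
  have hRy : (4 * R ^ 2 : ℝ) ≤ y := by exact_mod_cast hR
  have hR1' : (1 : ℝ) ≤ R := by exact_mod_cast hR1
  -- Each step to the next level loses at most a fraction `2R / y` of the size of level `0`.
  have key : ∀ r, r ≤ R → ((shifted (n := n) z a b x y 0).card : ℝ) * (1 - r * (2 * R / y)) ≤
      (shifted (n := n) z a b x y r).card := by
    intro r
    induction r with
    | zero => simp
    | succ r ih =>
      intro hr
      have ih := ih (by omega)
      have hrR : (r : ℝ) + 1 ≤ R := by exact_mod_cast hr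
      have hry : r ≤ y := by nlinarith
      have hstep : ((shifted (n := n) z a b x y r).card : ℝ) * (y - r) ≤
          (shifted (n := n) z a b x y (r + 1)).card * (y + r + 1) := by
        have h := card_shifted_step (n := n) z a b hab x y r
        have h' : (shifted (n := n) z a b x y r).card * (y - r) ≤
            (shifted (n := n) z a b x y (r + 1)).card * (y + r + 1) :=
          h.trans (Nat.mul_le_mul_left _ (by omega))
        have h'' : (((shifted (n := n) z a b x y r).card * (y - r) : ℕ) : ℝ) ≤
            (((shifted (n := n) z a b x y (r + 1)).card * (y + r + 1) : ℕ) : ℝ) := by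
          exact_mod_cast h'
        rw [Nat.cast_mul, Nat.cast_sub hry] at h''
        push_cast at h''
        exact h''
      set e0 := ((shifted (n := n) z a b x y 0).card : ℝ)
      set e := ((shifted (n := n) z a b x y r).card : ℝ)
      set e' := ((shifted (n := n) z a b x y (r + 1)).card : ℝ)
      have he0 : 0 ≤ e0 := Nat.cast_nonneg _
      have hr0 : (0 : ℝ) ≤ r := Nat.cast_nonneg _
      set δ : ℝ := 2 * R / y with hδ
      have hδy : δ * y = 2 * R := by rw [hδ]; field_simp
      have hδ0 : 0 ≤ δ := by positivity
      have hD : (0 : ℝ) < y + r + 1 := by positivity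
      have hyr : (r : ℝ) ≤ y := by exact_mod_cast hry
      push_cast
      have h1 : e0 * (1 - r * δ) * (y - r) ≤ e' * (y + r + 1) :=
        (mul_le_mul_of_nonneg_right ih (by linarith)).trans hstep
      -- It remains to compare `(1 - (r+1)δ)(y + r + 1)` with `(1 - rδ)(y - r)`.
      have h2 : (1 - (r + 1) * δ) * (y + r + 1) ≤ (1 - r * δ) * (y - r) := by
        nlinarith [mul_nonneg hr0 hδ0, mul_nonneg (mul_nonneg hr0 hr0) hδ0]
      have h3 : e0 * (1 - (r + 1) * δ) * (y + r + 1) ≤ e' * (y + r + 1) := by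
        have := mul_le_mul_of_nonneg_left h2 he0
        nlinarith
      exact le_of_mul_le_mul_right h3 hD
  have hhalf : ∀ r ∈ range R, ((shifted (n := n) z a b x y 0).card : ℝ) / 2 ≤
      (shifted (n := n) z a b x y r).card := by
    intro r hr
    have hr' : r ≤ R := (mem_range.1 hr).le
    refine le_trans ?_ (key r hr')
    have h1 : (r : ℝ) * (2 * R / y) ≤ 1 / 2 := by
      rw [mul_div_assoc', div_le_iff₀ hy]
      have : (r : ℝ) ≤ R := by exact_mod_cast hr'
      nlinarith
    have h0 : (0 : ℝ) ≤ (shifted (n := n) z a b x y 0).card := Nat.cast_nonneg _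
    nlinarith
  have hdisj : ∑ r ∈ range R, (shifted (n := n) z a b x y r).card ≤
      Fintype.card (Fin n → Pref m) := by
    classical
    rw [← card_biUnion]
    · exact card_le_univ _
    · intro r _ r' _ hne
      rw [Function.onFun, disjoint_left]
      intro t ht ht'
      simp only [shifted, mem_filter, mem_univ, true_and] at ht ht'
      omega
  have hs := sum_le_sum hhalf
  rw [sum_const, card_range, nsmul_eq_mul] at hs
  have : (∑ r ∈ range R, ((shifted (n := n) z a b x y r).card : ℝ)) ≤
      Fintype.card (Fin n → Pref m) := by exact_mod_cast hdisj
  linarith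

/-! ### Missing pairs of top choices are rare -/

lemma card_missing {n m : ℕ} (z o a b : Fin m) :
    (univ.filter fun t : Fin n → Pref m => demand2 t z o a b = 0).card =
      (univ.filter fun p : Pref m => ¬ (p z = a ∧ p o = b)).card ^ n := by
  classical
  have : (univ.filter fun t : Fin n → Pref m => demand2 t z o a b = 0) =
      Fintype.piFinset fun _ : Fin n => univ.filter fun p : Pref m => ¬ (p z = a ∧ p o = b) := by
    ext t
    simp [demand2, filter_eq_empty_iff, Fintype.mem_piFinset]
  rw [this, Fintype.card_piFinset]
  simp

lemma exists_top_two {m : ℕ} (z o a b : Fin m) (hzo : z ≠ o) (hab : a ≠ b) :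
    ∃ p : Pref m, p z = a ∧ p o = b := by
  refine ⟨(Equiv.swap z a).trans (Equiv.swap (Equiv.swap z a o) b), ?_, ?_⟩
  · simp only [Equiv.trans_apply, Equiv.swap_apply_left]
    apply Equiv.swap_apply_of_ne_of_ne _ hab
    intro h
    have : Equiv.swap z a z = Equiv.swap z a o := by rw [← h, Equiv.swap_apply_left]
    exact hzo ((Equiv.swap z a).injective this)
  · simp

lemma missing_ratio_lt {m : ℕ} (z o a b : Fin m) (hzo : z ≠ o) (hab : a ≠ b) :
    ((univ.filter fun p : Pref m => ¬ (p z = a ∧ p o = b)).card : ℝ) / Fintype.card (Pref m)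
      < 1 := by
  obtain ⟨p, hp⟩ := exists_top_two z o a b hzo hab
  rw [div_lt_one (by exact_mod_cast Fintype.card_pos)]
  have : (univ.filter fun p : Pref m => ¬ (p z = a ∧ p o = b)) ⊂ univ := by
    rw [filter_ssubset]
    exact ⟨p, mem_univ _, by simpa using hp⟩
  exact_mod_cast card_lt_card this

/-- The profiles at which RSD weakly rank dominates ABM fit the capacities exactly at `a` and `b`,
or lack some pair of top two choices. -/
lemma card_dominating_le {m : ℕ} (hm : 3 ≤ m) (q : Fin m → ℕ) (hq : ∀ j, 0 < q j) (z o : Fin m)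
    (hz : (z : ℕ) = 0) (ho : (o : ℕ) = 1) (a b : Fin m) :
    Nat.card {t : Fin (∑ j, q j) → Pref m // WeakRankDom t (RSD q t) (ABM q t)} ≤
      (shifted (n := ∑ j, q j) z a b (q a) (q b) 0).card +
      ∑ p ∈ univ.filter (fun p : Fin m × Fin m => p.1 ≠ p.2),
        (univ.filter fun t : Fin (∑ j, q j) → Pref m => demand2 t z o p.1 p.2 = 0).card := by
  classical
  rw [Nat.card_eq_fintype_card, Fintype.card_subtype]
  refine le_trans (card_le_card (t := shifted z a b (q a) (q b) 0 ∪
    (univ.filter (fun p : Fin m × Fin m => p.1 ≠ p.2)).biUnion fun p =>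
      univ.filter fun t : Fin (∑ j, q j) → Pref m => demand2 t z o p.1 p.2 = 0) ?_)
    ((card_union_le _ _).trans (Nat.add_le_add_left card_biUnion_le _))
  intro t ht
  simp only [mem_filter, mem_univ, true_and] at ht
  by_contra hcon
  simp only [mem_union, mem_biUnion, mem_filter, mem_univ, true_and, not_or, not_exists,
    not_and, shifted, Prod.forall] at hcon
  refine not_weakRankDom hm q hq rfl t z o hz ho ?_ ?_ ht
  · intro a' b' hab'
    exact Nat.one_le_iff_ne_zero.2 (hcon.2 a' b' hab')
  · by_contra! hall
    exact hcon.1 (hall a) (hall b)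

/-! ### The limit -/

lemma tendsto_missing {m : ℕ} (z o a b : Fin m) (hzo : z ≠ o) (hab : a ≠ b) (N : ℕ → ℕ)
    (hN : Filter.Tendsto N Filter.atTop Filter.atTop) :
    Filter.Tendsto (fun k =>
      ((univ.filter fun t : Fin (N k) → Pref m => demand2 t z o a b = 0).card : ℝ) /
        Fintype.card (Fin (N k) → Pref m)) Filter.atTop (nhds 0) := by
  have h := (tendsto_pow_atTop_nhds_zero_of_lt_one (by positivity)
    (missing_ratio_lt z o a b hzo hab)).comp hN
  refine h.congr fun k => ?_
  rw [card_missing, Fintype.card_pi_const]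
  push_cast
  rw [Function.comp_apply, div_pow]

lemma tendsto_shifted {m : ℕ} (z : Fin m) (N : ℕ → ℕ) (A B : ℕ → Fin m)
    (hAB : ∀ k, A k ≠ B k) (q : ℕ → Fin m → ℕ) (hle : ∀ k, q k (A k) ≤ q k (B k))
    (hgrow : ∀ C : ℕ, ∃ K : ℕ, ∀ k : ℕ, K ≤ k → ∀ j, C ≤ q k j) :
    Filter.Tendsto (fun k =>
      ((shifted (n := N k) z (A k) (B k) (q k (A k)) (q k (B k)) 0).card : ℝ) /
        Fintype.card (Fin (N k) → Pref m)) Filter.atTop (nhds 0) := by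
  rw [Metric.tendsto_atTop]
  intro ε hε
  obtain ⟨R, hR⟩ := exists_nat_gt (2 / ε)
  have hRpos : (0 : ℝ) < R := (by positivity : (0 : ℝ) < 2 / ε).trans hR
  obtain ⟨K, hK⟩ := hgrow (4 * R ^ 2)
  refine ⟨K, fun k hk => ?_⟩
  have h := card_exact_le (n := N k) z (A k) (B k) (hAB k) _ _ R (hle k) (hK k hk _)
    (by exact_mod_cast hRpos)
  have hT : (0 : ℝ) < Fintype.card (Fin (N k) → Pref m) := by exact_mod_cast Fintype.card_pos
  rw [Real.dist_0_eq_abs, abs_of_nonneg (by positivity), div_lt_iff₀ hT]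
  rw [div_lt_iff₀ hε] at hR
  have h2 : (R : ℝ) * (shifted (n := N k) z (A k) (B k) (q k (A k)) (q k (B k)) 0).card <
      R * (ε * Fintype.card (Fin (N k) → Pref m)) := by nlinarith
  exact lt_of_mul_lt_mul_left h2 hRpos.le

/-- in large school choice markets the share of profiles at which RSD
weakly rank dominates ABM vanishes: for fixed `m ≥ 3` and any sequence of capacity
vectors whose minimum capacity tends to infinity (with `n_k = ∑_j q^k_j` agents),
the fraction of type profiles at which `RSD(t)` weakly rank dominates `ABM(t)`
tends to 0. -/
theorem rsd_rank_dom_abm_vanishes_school_choice (m : ℕ) (hm : 3 ≤ m)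
    (q : ℕ → Fin m → ℕ)
    (hgrow : ∀ C : ℕ, ∃ K : ℕ, ∀ k : ℕ, K ≤ k → ∀ j, C ≤ q k j) :
    Filter.Tendsto
      (fun k : ℕ =>
        (Nat.card {t : Fin (∑ j, q k j) → Pref m //
            WeakRankDom t (RSD (q k) t) (ABM (q k) t)} : ℝ)
          / (Nat.card (Fin (∑ j, q k j) → Pref m) : ℝ))
      Filter.atTop (nhds 0) := by
  obtain ⟨z, hz⟩ : ∃ z : Fin m, (z : ℕ) = 0 := ⟨⟨0, by omega⟩, rfl⟩
  obtain ⟨o, ho⟩ : ∃ o : Fin m, (o : ℕ) = 1 := ⟨⟨1, by omega⟩, rfl⟩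
  have hzo : z ≠ o := by rintro rfl; omega
  -- `A k`, `B k` are two fixed objects, ordered by their capacities in the `k`-th setting.
  let A : ℕ → Fin m := fun k => if q k z ≤ q k o then z else o
  let B : ℕ → Fin m := fun k => if q k z ≤ q k o then o else z
  have hAB : ∀ k, A k ≠ B k := by
    intro k
    by_cases h : q k z ≤ q k o <;> simp [A, B, h, hzo, hzo.symm]
  have hle : ∀ k, q k (A k) ≤ q k (B k) := by
    intro k
    by_cases h : q k z ≤ q k o
    · simp [A, B, h]
    · simp [A, B, h]; omega
  have hN : Filter.Tendsto (fun k => ∑ j, q k j) Filter.atTop Filter.atTop := by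
    rw [Filter.tendsto_atTop]
    intro C
    obtain ⟨K, hK⟩ := hgrow C
    filter_upwards [Filter.eventually_ge_atTop K] with k hk
    exact (hK k hk z).trans
      (single_le_sum (f := q k) (fun _ _ => Nat.zero_le _) (mem_univ z))
  have h1 := tendsto_shifted z (fun k => ∑ j, q k j) A B hAB q hle hgrow
  have h2 := tendsto_finsetSum (univ.filter fun p : Fin m × Fin m => p.1 ≠ p.2)
    (fun p hp => tendsto_missing z o p.1 p.2 hzo (mem_filter.1 hp).2 (fun k => ∑ j, q k j) hN)
  have h3 := h1.add h2
  simp only [sum_const_zero, add_zero] at h3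
  obtain ⟨K, hK⟩ := hgrow 1
  refine tendsto_of_tendsto_of_tendsto_of_le_of_le' tendsto_const_nhds h3
    (Filter.Eventually.of_forall fun k => by positivity) ?_
  filter_upwards [Filter.eventually_ge_atTop K] with k hk
  have h := card_dominating_le hm (q k) (fun j => hK k hk j) z o hz ho (A k) (B k)
  rw [← sum_div, ← add_div, Nat.card_eq_fintype_card (α := Fin (∑ j, q k j) → Pref m)]
  gcongr
  exact_mod_cast h
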